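/- Let n, G be positive integers, let m₁, …, m_G be positive integers with m₁ + ⋯ + m_G < n, and let A_g be a real m_g×n matrix for each g ∈ {1,…,G}. Then there exists a nonzero u ∈ ℝ^n with A_g u = 0 for every g, and consequently, for every nonempty bounded set X ⊆ ℝ^n, the inferred set of the family {A_1, …, A_G} strictly contains X: the condition Σ_{g=1}^G m_g ≥ n is necessary for model identification when the operators have different numbers of measurements. -/

import Mathlib

open Matrix

/-!
Stacking the operators gives a single linear map into the product of their ranges, whose dimension
is the sum of the ranks. When this sum is smaller than the dimension of the source, some `u ≠ 0` is
invisible to every operator. If `x ∈ X`, the whole line `x + c • u` is then indistinguishable from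
`x`, and a bounded `X` cannot contain it.
-/

open Module

/-- The inferred set of `X` under a family of measurements `f`: the points each of whose
measurements is attained on `X`, possibly by a different point of `X` for each index. Model
identification is the equality `inferredSet f X = X`. -/
def inferredSet {ι α : Type*} {β : ι → Type*} (f : ∀ i, α → β i) (X : Set α) : Set α :=
  {v | ∀ i, ∃ x ∈ X, f i v = f i x}

theorem subset_inferredSet {ι α : Type*} {β : ι → Type*} (f : ∀ i, α → β i) (X : Set α) :
    X ⊆ inferredSet f X :=
  fun x hx _ => ⟨x, hx, rfl⟩

theorem add_mem_inferredSet {ι R E : Type*} {F : ι → Type*} [Semiring R]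
    [AddCommMonoid E] [Module R E] [∀ i, AddCommMonoid (F i)] [∀ i, Module R (F i)]
    {A : ∀ i, E →ₗ[R] F i} {X : Set E} {x u : E} (hx : x ∈ X) (hu : ∀ i, A i u = 0) :
    x + u ∈ inferredSet (fun i => A i) X :=
  fun i => ⟨x, hx, by simp only [map_add, hu i, add_zero]⟩

theorem exists_ne_zero_forall_apply_eq_zero_of_sum_finrank_range_lt {ι K V : Type*}
    {W : ι → Type*} [Fintype ι] [DivisionRing K] [AddCommGroup V] [Module K V]
    [∀ i, AddCommGroup (W i)] [∀ i, Module K (W i)] (A : ∀ i, V →ₗ[K] W i)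
    (hA : ∑ i, finrank K (A i).range < finrank K V) :
    ∃ u : V, u ≠ 0 ∧ ∀ i, A i u = 0 := by
  have : FiniteDimensional K V := finite_of_finrank_pos (Nat.zero_lt_of_lt hA)
  let L : V →ₗ[K] ∀ i, (A i).range := LinearMap.pi fun i => (A i).rangeRestrict
  have hL : L.ker ≠ ⊥ := LinearMap.ker_ne_bot_of_finrank_lt (by rwa [finrank_pi_fintype])
  obtain ⟨u, hu, hu0⟩ := Submodule.exists_mem_ne_zero_of_ne_bot hL
  exact ⟨u, hu0, fun i => congrArg Subtype.val (congrFun (LinearMap.mem_ker.1 hu) i)⟩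

section Bounded

variable {𝕜 E : Type*} [NontriviallyNormedField 𝕜] [NormedAddCommGroup E] [NormedSpace 𝕜 E]

variable (𝕜) in
theorem exists_add_smul_notMem_of_isBounded {X : Set E} (hX : Bornology.IsBounded X)
    (x : E) {u : E} (hu : u ≠ 0) : ∃ c : 𝕜, x + c • u ∉ X := by
  obtain ⟨C, hC⟩ := hX.exists_norm_le
  obtain ⟨c, hc⟩ := NormedField.exists_lt_norm 𝕜 ((C + ‖x‖) / ‖u‖)
  refine ⟨c, fun hmem => hc.not_ge ((le_div_iff₀ (norm_pos_iff.2 hu)).2 ?_)⟩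
  calc ‖c‖ * ‖u‖ = ‖x + c • u - x‖ := by rw [add_sub_cancel_left, norm_smul]
    _ ≤ ‖x + c • u‖ + ‖x‖ := norm_sub_le _ _
    _ ≤ C + ‖x‖ := by gcongr; exact hC _ hmem

variable {ι : Type*} {F : ι → Type*} [∀ i, AddCommGroup (F i)] [∀ i, Module 𝕜 (F i)]

theorem ssubset_inferredSet_of_isBounded {A : ∀ i, E →ₗ[𝕜] F i} {u : E} (hu0 : u ≠ 0)
    (hu : ∀ i, A i u = 0) {X : Set E} (hne : X.Nonempty) (hX : Bornology.IsBounded X) :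
    X ⊂ inferredSet (fun i => A i) X := by
  obtain ⟨x, hx⟩ := hne
  obtain ⟨c, hc⟩ := exists_add_smul_notMem_of_isBounded 𝕜 hX x hu0
  have hcu (i : ι) : A i (c • u) = 0 := by rw [map_smul, hu i, smul_zero]
  exact (subset_inferredSet _ X).ssubset_of_mem_notMem (add_mem_inferredSet hx hcu) hc

theorem stmt13_general [Fintype ι] (A : ∀ i, E →ₗ[𝕜] F i)
    (hA : ∑ i, finrank 𝕜 (A i).range < finrank 𝕜 E) :
    ∃ u : E, u ≠ 0 ∧ (∀ i, A i u = 0) ∧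
      ∀ X : Set E, X.Nonempty → Bornology.IsBounded X → X ⊂ inferredSet (fun i => A i) X := by
  obtain ⟨u, hu0, hu⟩ := exists_ne_zero_forall_apply_eq_zero_of_sum_finrank_range_lt A hA
  exact ⟨u, hu0, hu, fun _ => ssubset_inferredSet_of_isBounded hu0 hu⟩

end Bounded

/-- if `m₁ + ⋯ + m_G < n`, there is a nonzero `u` in the common nullspace of
the operators `A_g ∈ ℝ^{m_g × n}`; consequently the inferred set strictly contains every
nonempty bounded `X`: `∑ m_g ≥ n` is necessary for model identification. -/
theorem stmt13 (n G : ℕ) (hn : 0 < n) (hG : 0 < G)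
    (msz : Fin G → ℕ) (hmsz : ∀ g, 0 < msz g) (hsum : ∑ g, msz g < n)
    (A : (g : Fin G) → Matrix (Fin (msz g)) (Fin n) ℝ) :
    ∃ u : Fin n → ℝ, u ≠ 0 ∧ (∀ g : Fin G, A g *ᵥ u = 0) ∧
      ∀ X : Set (Fin n → ℝ), X.Nonempty → Bornology.IsBounded X →
        X ⊂ {v | ∀ g : Fin G, ∃ x ∈ X, A g *ᵥ v = A g *ᵥ x} := by
  have hrank : ∑ g, (A g).rank < n :=
    (Finset.sum_le_sum fun g _ => (A g).rank_le_height).trans_lt hsum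
  exact stmt13_general (fun g => (A g).mulVecLin) (by rwa [finrank_fin_fun])
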